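/- For every non-standard model M of Peano arithmetic (i.e., a model of PA not isomorphic to the standard model ℕ), the standard system SSy(M) is a Scott set: (S1) if X and Y are both in SSy(M) then so is X ⊕ Y = 2X ∪ (2Y + 1); (S2) if X ∈ SSy(M) and Y ⊆ ℕ is Turing reducible to X then Y ∈ SSy(M); (S3) if SSy(M) contains (a code of) an infinite binary tree T then SSy(M) contains an infinite path of T. -/

import Mathlib

open FirstOrder FirstOrder.Language

/-- Function symbols of the language of arithmetic: `0`, `1`, `+`, `·`. -/
inductive arithFunc : ℕ → Type
  | zero : arithFunc 0
  | one : arithFunc 0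
  | add : arithFunc 2
  | mul : arithFunc 2
  deriving DecidableEq

/-- Relation symbols of the language of arithmetic: `<`. -/
inductive arithRel : ℕ → Type
  | lt : arithRel 2
  deriving DecidableEq

/-- The first-order language of arithmetic `{0, 1, +, ·, <}`. -/
def arith : FirstOrder.Language := ⟨arithFunc, arithRel⟩

namespace Arith

variable {M : Type*} [arith.Structure M]

/-- The interpretation of `0`. -/
def zeroM (M : Type*) [arith.Structure M] : M :=
  Structure.funMap (L := arith) arithFunc.zero ![]

/-- The interpretation of `1`. -/
def oneM (M : Type*) [arith.Structure M] : M :=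
  Structure.funMap (L := arith) arithFunc.one ![]

/-- The interpretation of `+`. -/
def addM (x y : M) : M := Structure.funMap (L := arith) arithFunc.add ![x, y]

/-- The interpretation of `·`. -/
def mulM (x y : M) : M := Structure.funMap (L := arith) arithFunc.mul ![x, y]

/-- The interpretation of `<`. -/
def ltM (x y : M) : Prop := Structure.RelMap (L := arith) arithRel.lt ![x, y]

/-- Non-strict order. -/
def leM (x y : M) : Prop := ltM x y ∨ x = y

/-- The numeral `n` in `M`: `0`, or `1 + 1 + ⋯ + 1`. -/
def numeral (M : Type*) [arith.Structure M] : ℕ → M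
  | 0 => zeroM M
  | n + 1 => addM (numeral M n) (oneM M)

/-- The standard `arith`-structure on `ℕ`. -/
instance : arith.Structure ℕ where
  funMap {n} f v :=
    match f with
    | .zero => 0
    | .one => 1
    | .add => v 0 + v 1
    | .mul => v 0 * v 1
  RelMap {n} r v :=
    match r with
    | .lt => v 0 < v 1

/-- `M` is a model of Peano arithmetic: it satisfies the finitely many basic axioms of
`PA` together with induction for all parametrically definable sets (which is equivalent
to the usual first-order induction scheme). -/
def IsPAModel (M : Type*) [arith.Structure M] : Prop :=
  (∀ x : M, addM x (zeroM M) = x) ∧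
  (∀ x y : M, addM x (addM y (oneM M)) = addM (addM x y) (oneM M)) ∧
  (∀ x : M, mulM x (zeroM M) = zeroM M) ∧
  (∀ x y : M, mulM x (addM y (oneM M)) = addM (mulM x y) x) ∧
  (∀ x : M, ¬ ltM x (zeroM M)) ∧
  (∀ x y : M, ltM x (addM y (oneM M)) ↔ (ltM x y ∨ x = y)) ∧
  (∀ x : M, addM x (oneM M) ≠ zeroM M) ∧
  (∀ x y : M, addM x (oneM M) = addM y (oneM M) → x = y) ∧
  (∀ s : Set M, Set.Definable₁ (Set.univ : Set M) arith s →
    zeroM M ∈ s → (∀ x ∈ s, addM x (oneM M) ∈ s) → ∀ x : M, x ∈ s)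

/-- An element of `M` is standard if it is a numeral. -/
def IsStd (x : M) : Prop := ∃ n : ℕ, x = numeral M n

/-- `M` is a non-standard model of `PA`: a model of `PA` not isomorphic to the standard
model `ℕ`. -/
def NonstandardModel (M : Type*) [arith.Structure M] : Prop :=
  IsPAModel M ∧ ¬ Nonempty (M ≃[arith] ℕ)

/-- `(x)_i = 1`: the `i`-th binary digit of `x` is `1`, for standard `i`.  This is expressed
by saying that `x = u·2^(i+1) + (2^i + v)` with `v < 2^i`, where `2^i`, `2^(i+1)` are
numerals. -/
def digitB (x : M) (i : ℕ) : Prop :=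
  ∃ u v : M, x = addM (mulM u (numeral M (2 ^ (i + 1)))) (addM (numeral M (2 ^ i)) v) ∧
    ltM v (numeral M (2 ^ i))

/-- The standard system of `M`: the collection of subsets of `ℕ` coded by some
non-standard element of `M` (via its standard binary digits). -/
def SSy (M : Type*) [arith.Structure M] : Set (Set ℕ) :=
  {X | ∃ a : M, ¬ IsStd a ∧ ∀ i : ℕ, i ∈ X ↔ digitB a i}

/-- A function `M → M` is definable (with parameters) if its graph is a definable set. -/
def DefinableFun₁ (f : M → M) : Prop :=
  Set.Definable (Set.univ : Set M) arith {v : Fin 2 → M | f (v 0) = v 1}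

/-- A `k`-ary function `M^k → M` is definable (with parameters) if its graph is a
definable set. -/
def DefinableFun {k : ℕ} (F : (Fin k → M) → M) : Prop :=
  Set.Definable (Set.univ : Set M) arith
    {v : Fin (k + 1) → M | F (fun i => v i.castSucc) = v (Fin.last k)}

/-- `c` is the internal cardinality of the set `D ⊆ M`: there is an `M`-definable
bijection between `{x : x < c}` and `D`. -/
def InternalCard (D : Set M) (c : M) : Prop :=
  ∃ f : M → M, DefinableFun₁ f ∧ Set.BijOn f {x : M | ltM x c} D

/-- `y = 2^x` in the model `M`, expressed via the existence of a definable function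
satisfying the recursion of the base-`2` exponential up to `x`. -/
def IsPow2 (x y : M) : Prop :=
  ∃ f : M → M, DefinableFun₁ f ∧ f (zeroM M) = oneM M ∧
    (∀ z : M, ltM z x → f (addM z (oneM M)) = addM (f z) (f z)) ∧ f x = y

end Arith

namespace Arith

/-- Relativized partial recursiveness: `RecursiveIn O f` means the partial function `f`
is partial recursive in the total oracle `O`.  This mirrors `Nat.Partrec`, with an extra
constructor for the oracle. -/
inductive RecursiveIn (O : ℕ → ℕ) : (ℕ →. ℕ) → Prop
  | zero : RecursiveIn O (pure 0)
  | succ : RecursiveIn O Nat.succ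
  | left : RecursiveIn O ↑fun n : ℕ => n.unpair.1
  | right : RecursiveIn O ↑fun n : ℕ => n.unpair.2
  | oracle : RecursiveIn O O
  | pair {f g} : RecursiveIn O f → RecursiveIn O g →
      RecursiveIn O fun n => Nat.pair <$> f n <*> g n
  | comp {f g} : RecursiveIn O f → RecursiveIn O g → RecursiveIn O fun n => g n >>= f
  | prec {f g} : RecursiveIn O f → RecursiveIn O g → RecursiveIn O (Nat.unpaired fun a n =>
      n.rec (f a) fun y IH => do let i ← IH; g (Nat.pair a (Nat.pair y i)))
  | rfind {f} : RecursiveIn O f →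
      RecursiveIn O fun a => Nat.rfind fun n => (fun m => m = 0) <$> f (Nat.pair a n)

open Classical in
/-- The characteristic function of a set of natural numbers. -/
noncomputable def charFn (X : Set ℕ) : ℕ → ℕ := fun n => if n ∈ X then 1 else 0

/-- Turing reducibility between sets of natural numbers. -/
def TuringLE (Y X : Set ℕ) : Prop := RecursiveIn (charFn X) (charFn Y)

/-- The Turing join `X ⊕ Y = 2X ∪ (2Y + 1)`. -/
def turingJoin (X Y : Set ℕ) : Set ℕ :=
  {n | ∃ m ∈ X, n = 2 * m} ∪ {n | ∃ m ∈ Y, n = 2 * m + 1}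

/-- A Turing ideal: a collection of subsets of `ℕ` closed under Turing join and Turing
reducibility. -/
def TuringIdeal (S : Set (Set ℕ)) : Prop :=
  (∀ X ∈ S, ∀ Y ∈ S, turingJoin X Y ∈ S) ∧
  (∀ X ∈ S, ∀ Y : Set ℕ, TuringLE Y X → Y ∈ S)

/-- The Turing ideal generated by a collection of subsets of `ℕ`. -/
def tIdealGen (C : Set (Set ℕ)) : Set (Set ℕ) :=
  ⋂₀ {I | TuringIdeal I ∧ C ⊆ I}

/-- `T ⊆ ℕ` codes a binary tree: the set of finite binary sequences whose codes lie in
`T` is closed under initial segments. -/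
def IsBinTreeSet (T : Set ℕ) : Prop :=
  ∀ s : List Bool, Encodable.encode s ∈ T → ∀ t : List Bool, t <+: s → Encodable.encode t ∈ T

/-- The tree coded by `T` is infinite. -/
def TreeInf (T : Set ℕ) : Prop := {s : List Bool | Encodable.encode s ∈ T}.Infinite

/-- `P ⊆ ℕ`, viewed as an infinite branch via its characteristic function, is a path
through the tree coded by `T`. -/
def PathThrough (P T : Set ℕ) : Prop :=
  ∀ f : ℕ → Bool, (∀ i : ℕ, f i = true ↔ i ∈ P) →
    ∀ m : ℕ, Encodable.encode (List.ofFn fun i : Fin m => f i) ∈ T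

/-- A Scott set: a nonempty Turing ideal such that every infinite binary tree in it has
an infinite path in it. -/
def ScottSet (S : Set (Set ℕ)) : Prop :=
  S.Nonempty ∧ TuringIdeal S ∧
  ∀ T ∈ S, IsBinTreeSet T → TreeInf T → ∃ P ∈ S, PathThrough P T

open Classical in
/-- The characteristic function of a set, with values in `Bool`. -/
noncomputable def chi (X : Set ℕ) : ℕ → Bool := fun n => if n ∈ X then true else false

/-- The iterated Turing join `⊕_{i<k} X i`. -/
def joinMany : {k : ℕ} → (Fin k → Set ℕ) → Set ℕ
  | 0, _ => ∅
  | (k + 1), X => turingJoin (joinMany fun i => X i.castSucc) (X (Fin.last k))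

end Arith

/-!
Induction for definable sets turns a definable property of all standard numbers into a property of
some nonstandard number (overspill).  Sequences coded by Gödel's `β`-function give definable
versions in `M` of primitive recursion and of binary digits; since `β` already codes every finite
sequence of standard numbers by a standard number, these versions take the right values at standard
arguments without any number theory inside `M`.  Overspill applied to the digits shows that
`SSy M` consists exactly of the traces on `ℕ` of the definable subsets of `M`.

Traces of definable sets are closed under joins, and under Turing reducibility because a function
that is recursive in the trace of a definable set is represented on `ℕ` by a definable function.
An infinite binary tree that is the trace of `D` has branches of every standard length, hence by
overspill there is an `a` whose first `m` digits have their code in `D` for all `m` below some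
nonstandard number; the standard digits of `a` are the desired path.
-/

namespace Arith

/-! ### Definable predicates and functions -/

section Definability

variable {L : FirstOrder.Language} {M : Type*} [L.Structure M] {A : Set M} {α β : Type*}

/-- A predicate on valuations of the variables `α` in `M` is definable with parameters in `A`.
Connectives and quantifiers are easier to follow on predicates than on sets of valuations. -/
def DefinablePred (L : FirstOrder.Language) [L.Structure M] (A : Set M)
    (P : (α → M) → Prop) : Prop :=
  A.Definable L {v | P v}

theorem definableFun_const (a : M) : Set.DefinableFun L Set.univ fun _ : α → M => a :=
  L.definableFun_const α (Set.mem_univ a)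

theorem definableFun_reindex [Finite α] {f : (α → M) → M} (σ : α → β)
    (hf : A.DefinableFun L f) : A.DefinableFun L fun v : β → M => f fun i => v (σ i) :=
  hf.comp (g := fun v i => v (σ i)) fun _ => .proj L

theorem definableFun_comp₁ {G : M → M} {f : (α → M) → M}
    (hG : A.DefinableFun L fun v : Fin 1 → M => G (v 0)) (hf : A.DefinableFun L f) :
    A.DefinableFun L fun v => G (f v) :=
  hG.comp (g := fun v => ![f v]) (Fin.forall_fin_one.2 hf)

theorem definableFun_comp₂ {G : M → M → M} {f g : (α → M) → M}
    (hG : A.DefinableFun L fun v : Fin 2 → M => G (v 0) (v 1)) (hf : A.DefinableFun L f)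
    (hg : A.DefinableFun L g) : A.DefinableFun L fun v => G (f v) (g v) :=
  hG.comp (g := fun v => ![f v, g v]) (Fin.forall_fin_two.2 ⟨hf, hg⟩)

namespace DefinablePred

variable {P Q : (α → M) → Prop} {f g : (α → M) → M}

theorem eq (hf : A.DefinableFun L f) (hg : A.DefinableFun L g) :
    DefinablePred L A fun v => f v = g v :=
  hf.ofPred_eq hg

theorem mem {D : Set M} (hD : A.Definable₁ L D) (hf : A.DefinableFun L f) :
    DefinablePred L A fun v => f v ∈ D :=
  Set.Definable.preimage_map (F := fun v => ![f v]) (Fin.forall_fin_one.2 hf) hD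

theorem comp₂ {R : M → M → Prop} (hR : DefinablePred L A fun v : Fin 2 → M => R (v 0) (v 1))
    (hf : A.DefinableFun L f) (hg : A.DefinableFun L g) :
    DefinablePred L A fun v => R (f v) (g v) :=
  Set.Definable.preimage_map (F := fun v => ![f v, g v]) (Fin.forall_fin_two.2 ⟨hf, hg⟩) hR

theorem not (hP : DefinablePred L A P) : DefinablePred L A fun v => ¬P v :=
  hP.compl

theorem and (hP : DefinablePred L A P) (hQ : DefinablePred L A Q) :
    DefinablePred L A fun v => P v ∧ Q v :=
  hP.inter hQ

theorem or (hP : DefinablePred L A P) (hQ : DefinablePred L A Q) :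
    DefinablePred L A fun v => P v ∨ Q v :=
  hP.union hQ

theorem imp (hP : DefinablePred L A P) (hQ : DefinablePred L A Q) :
    DefinablePred L A fun v => P v → Q v := by
  simpa only [imp_iff_not_or] using hP.not.or hQ

theorem iff (hP : DefinablePred L A P) (hQ : DefinablePred L A Q) :
    DefinablePred L A fun v => P v ↔ Q v := by
  simpa only [iff_def] using (hP.imp hQ).and (hQ.imp hP)

theorem ex {P : (α → M) → M → Prop}
    (hP : DefinablePred L A fun w : Option α → M => P (fun i => w (some i)) (w none)) :
    DefinablePred L A fun v => ∃ x, P v x := by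
  have hex := (hP.preimage_comp (Equiv.optionEquivSumPUnit α)).exists_of_finite
  have hset : {v : α → M | ∃ x, P v x} = {v | ∃ u : PUnit → M, P v (u ())} :=
    Set.ext fun v => ⟨fun ⟨x, hx⟩ => ⟨fun _ => x, hx⟩, fun ⟨u, hu⟩ => ⟨u (), hu⟩⟩
  rwa [DefinablePred, hset]

theorem all {P : (α → M) → M → Prop}
    (hP : DefinablePred L A fun w : Option α → M => P (fun i => w (some i)) (w none)) :
    DefinablePred L A fun v => ∀ x, P v x := by
  simpa only [not_exists, not_not] using (ex (P := fun v x => ¬P v x) hP.not).not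

theorem existsUnique {P : (α → M) → M → Prop}
    (hP : DefinablePred L A fun w : Option α → M => P (fun i => w (some i)) (w none)) :
    DefinablePred L A fun v => ∃! x, P v x := by
  have hP' : DefinablePred L A fun w : Option (Option α) → M =>
      P (fun i => w (some (some i))) (w none) :=
    hP.preimage_comp fun i : Option α => i.elim none fun j => some (some j)
  exact ex (P := fun v x => P v x ∧ ∀ y, P v y → y = x)
    (hP.and (all (hP'.imp (eq (.proj L) (.proj L)))))

end DefinablePred

end Definability

local notation:65 x:65 "+ᴹ" y:66 => addM x y
local notation:70 x:70 "*ᴹ" y:71 => mulM x y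
local notation:50 x:51 "<ᴹ" y:51 => ltM x y

section DefinableArithmetic

variable {M : Type*} [arith.Structure M] {α : Type*} {f g : (α → M) → M}

theorem definableFun_addM (hf : Set.univ.DefinableFun arith f)
    (hg : Set.univ.DefinableFun arith g) :
    Set.univ.DefinableFun arith fun v => f v +ᴹ g v :=
  (Set.DefinableFun.fun_symbol (L := arith) arithFunc.add).of_empty.comp
    (g := fun v => ![f v, g v]) (Fin.forall_fin_two.2 ⟨hf, hg⟩)

theorem definableFun_mulM (hf : Set.univ.DefinableFun arith f)
    (hg : Set.univ.DefinableFun arith g) :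
    Set.univ.DefinableFun arith fun v => f v *ᴹ g v :=
  (Set.DefinableFun.fun_symbol (L := arith) arithFunc.mul).of_empty.comp
    (g := fun v => ![f v, g v]) (Fin.forall_fin_two.2 ⟨hf, hg⟩)

theorem DefinablePred.ltM (hf : Set.univ.DefinableFun arith f)
    (hg : Set.univ.DefinableFun arith g) :
    DefinablePred arith Set.univ fun v => f v <ᴹ g v := by
  refine comp₂ (R := Arith.ltM) (Set.Definable.mono (Set.empty_definable_iff.2 ⟨
    Relations.formula₂ (L := arith) arithRel.lt (Term.var 0) (Term.var 1), ?_⟩)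
    (Set.empty_subset _)) hf hg
  ext v
  exact Iff.symm (Formula.realize_rel₂ (L := arith) (M := M))

theorem definableFun₁_of {G : M → M}
    (hG : Set.univ.DefinableFun arith fun v : Fin 1 → M => G (v 0)) : DefinableFun₁ G :=
  hG.preimage_comp fun i : Option (Fin 1) => i.elim 1 fun _ => 0

theorem DefinableFun₁.comp {G : M → M} (hG : DefinableFun₁ G)
    (hf : Set.univ.DefinableFun arith f) : Set.univ.DefinableFun arith fun v => G (f v) :=
  definableFun_comp₁ (hG.preimage_comp ![some 0, none]) hf

/-- Definite description in `M`: the unique element satisfying `P`, with junk value `0` if there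
is no such element or more than one. -/
noncomputable def descrM (P : M → Prop) : M :=
  open Classical in if h : ∃! x, P x then h.choose else zeroM M

theorem descrM_eq {P : M → Prop} {a : M} (hP : ∀ x, P x ↔ x = a) : descrM P = a := by
  have h : ∃! x, P x := ⟨a, (hP a).2 rfl, fun x hx => (hP x).1 hx⟩
  rw [descrM, dif_pos h]
  exact (hP _).1 h.choose_spec.1

theorem descrM_eq_iff {P : M → Prop} {a : M} :
    descrM P = a ↔ (∃! x, P x) ∧ P a ∨ (¬∃! x, P x) ∧ a = zeroM M := by
  by_cases h : ∃! x, P x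
  · obtain ⟨b, hb, hunique⟩ := h
    rw [descrM_eq (a := b) fun x => ⟨hunique x, fun hx => hx ▸ hb⟩]
    grind [ExistsUnique]
  · rw [descrM, dif_neg h]
    grind

theorem definableFun_descrM {P : (α → M) → M → Prop}
    (hP : DefinablePred arith Set.univ
      fun w : Option α → M => P (fun i => w (some i)) (w none)) :
    Set.univ.DefinableFun arith fun v => descrM (P v) := by
  suffices DefinablePred arith Set.univ fun w : Option α → M =>
    descrM (P fun i => w (some i)) = w none from this
  simp only [descrM_eq_iff]
  have hunique : DefinablePred arith Set.univ fun w : Option α → M =>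
    ∃! x, P (fun i => w (some i)) x := hP.existsUnique.preimage_comp some
  exact (hunique.and hP).or (hunique.not.and (.eq (.proj arith) (definableFun_const _)))

end DefinableArithmetic

/-! ### Numerals and overspill -/

section Numerals

variable {M : Type*} [arith.Structure M]

theorem isStd_numeral (n : ℕ) : IsStd (numeral M n) := ⟨n, rfl⟩

theorem numeral_add_one (n : ℕ) : numeral M n +ᴹ oneM M = numeral M (n + 1) := rfl

namespace IsPAModel

theorem add_zero (h : IsPAModel M) (x : M) : x +ᴹ zeroM M = x := h.1 x

theorem add_succ (h : IsPAModel M) (x y : M) : x +ᴹ (y +ᴹ oneM M) = x +ᴹ y +ᴹ oneM M := h.2.1 x y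

theorem mul_zero (h : IsPAModel M) (x : M) : x *ᴹ zeroM M = zeroM M := h.2.2.1 x

theorem mul_succ (h : IsPAModel M) (x y : M) : x *ᴹ (y +ᴹ oneM M) = x *ᴹ y +ᴹ x := h.2.2.2.1 x y

theorem not_lt_zero (h : IsPAModel M) (x : M) : ¬x <ᴹ zeroM M := h.2.2.2.2.1 x

theorem lt_succ_iff (h : IsPAModel M) {x y : M} : x <ᴹ y +ᴹ oneM M ↔ leM x y :=
  h.2.2.2.2.2.1 x y

theorem succ_ne_zero (h : IsPAModel M) (x : M) : x +ᴹ oneM M ≠ zeroM M := h.2.2.2.2.2.2.1 x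

theorem succ_injective (h : IsPAModel M) : Function.Injective fun x : M => x +ᴹ oneM M :=
  fun x y => h.2.2.2.2.2.2.2.1 x y

theorem induction (h : IsPAModel M) {P : M → Prop}
    (hP : DefinablePred arith Set.univ fun v : Fin 1 → M => P (v 0)) (zero : P (zeroM M))
    (succ : ∀ x, P x → P (x +ᴹ oneM M)) (x : M) : P x :=
  h.2.2.2.2.2.2.2.2 {x | P x} hP zero succ x

theorem zero_add (h : IsPAModel M) (x : M) : zeroM M +ᴹ x = x := by
  refine h.induction (P := fun x => zeroM M +ᴹ x = x) ?_ (h.add_zero _)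
    (fun x hx => by rw [h.add_succ, hx]) x
  apply_rules [Set.DefinableFun.proj, definableFun_addM, definableFun_const, DefinablePred.eq]

theorem numeral_one (h : IsPAModel M) : numeral M 1 = oneM M := h.zero_add _

theorem numeral_add (h : IsPAModel M) (m n : ℕ) :
    numeral M m +ᴹ numeral M n = numeral M (m + n) := by
  induction n with
  | zero => exact h.add_zero _
  | succ n ih => rw [numeral, h.add_succ, ih, numeral_add_one, Nat.add_assoc]

theorem numeral_mul (h : IsPAModel M) (m n : ℕ) :
    numeral M m *ᴹ numeral M n = numeral M (m * n) := by
  induction n with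
  | zero => exact h.mul_zero _
  | succ n ih => rw [numeral, h.mul_succ, ih, h.numeral_add, Nat.mul_succ]

theorem numeral_injective (h : IsPAModel M) : Function.Injective (numeral M) := by
  intro m n hmn
  induction m generalizing n with
  | zero =>
    cases n with
    | zero => rfl
    | succ n => exact absurd hmn.symm (h.succ_ne_zero _)
  | succ m ih =>
    cases n with
    | zero => exact absurd hmn (h.succ_ne_zero _)
    | succ n => exact congrArg _ (ih (h.succ_injective hmn))

theorem numeral_inj (h : IsPAModel M) {m n : ℕ} : numeral M m = numeral M n ↔ m = n :=
  h.numeral_injective.eq_iff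

theorem lt_numeral_iff (h : IsPAModel M) {x : M} {n : ℕ} :
    x <ᴹ numeral M n ↔ ∃ m < n, x = numeral M m := by
  induction n with
  | zero => simpa using! h.not_lt_zero x
  | succ n ih =>
    rw [numeral, h.lt_succ_iff, leM, ih]
    simp only [Nat.lt_succ_iff_lt_or_eq, or_and_right, exists_or, exists_eq_left]

theorem numeral_lt_numeral (h : IsPAModel M) {m n : ℕ} :
    numeral M m <ᴹ numeral M n ↔ m < n := by
  simp [h.lt_numeral_iff, h.numeral_inj]

theorem zero_or_succ (h : IsPAModel M) (x : M) : x = zeroM M ∨ ∃ y, x = y +ᴹ oneM M := by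
  refine h.induction (P := fun x => x = zeroM M ∨ ∃ y, x = y +ᴹ oneM M) ?_ (Or.inl rfl)
    (fun x _ => Or.inr ⟨x, rfl⟩) x
  apply_rules [Set.DefinableFun.proj, definableFun_addM, definableFun_const, DefinablePred.eq,
    DefinablePred.or, DefinablePred.ex]

theorem zero_le (h : IsPAModel M) (x : M) : leM (zeroM M) x := by
  refine h.induction (P := leM (zeroM M)) ?_ (Or.inr rfl)
    (fun x hx => Or.inl (h.lt_succ_iff.2 hx)) x
  apply_rules [Set.DefinableFun.proj, definableFun_const, DefinablePred.eq, DefinablePred.or,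
    DefinablePred.ltM]

theorem succ_le_of_lt (h : IsPAModel M) {x y : M} : x <ᴹ y → leM (x +ᴹ oneM M) y := by
  refine h.induction (P := fun y => x <ᴹ y → leM (x +ᴹ oneM M) y) ?_
    (fun hx => absurd hx (h.not_lt_zero x)) (fun y ih hx => ?_) y
  · apply_rules [Set.DefinableFun.proj, definableFun_addM, definableFun_const,
      DefinablePred.imp, DefinablePred.eq, DefinablePred.or, DefinablePred.ltM]
  · rcases h.lt_succ_iff.1 hx with hxy | rfl
    · exact Or.inl (h.lt_succ_iff.2 (ih hxy))
    · exact Or.inr rfl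

theorem numeral_lt_of_not_isStd (h : IsPAModel M) {x : M} (hx : ¬IsStd x) (n : ℕ) :
    numeral M n <ᴹ x := by
  suffices leM (numeral M n) x from this.resolve_right fun e => hx ⟨n, e.symm⟩
  induction n with
  | zero => exact h.zero_le x
  | succ n ih => exact h.succ_le_of_lt (ih.resolve_right fun e => hx ⟨n, e.symm⟩)

theorem isStd_of_lt (h : IsPAModel M) {x y : M} : x <ᴹ y → IsStd y → IsStd x := by
  rintro hxy ⟨n, rfl⟩
  obtain ⟨m, -, rfl⟩ := h.lt_numeral_iff.1 hxy
  exact isStd_numeral m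

theorem isStd_of_add (h : IsPAModel M) {x y : M} : IsStd (x +ᴹ y) → IsStd x ∧ IsStd y := by
  rintro ⟨n, hn⟩
  induction n generalizing y with
  | zero =>
    rcases h.zero_or_succ y with rfl | ⟨y, rfl⟩
    · exact ⟨⟨0, (h.add_zero x).symm.trans hn⟩, isStd_numeral 0⟩
    · exact absurd ((h.add_succ x y).symm.trans hn) (h.succ_ne_zero _)
  | succ n ih =>
    rcases h.zero_or_succ y with rfl | ⟨y, rfl⟩
    · exact ⟨⟨n + 1, (h.add_zero x).symm.trans hn⟩, isStd_numeral 0⟩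
    · obtain ⟨hx, k, rfl⟩ := ih (h.succ_injective ((h.add_succ x y).symm.trans hn))
      exact ⟨hx, isStd_numeral (k + 1)⟩

theorem numeral_eq_add_iff (h : IsPAModel M) {x y : M} {n : ℕ} :
    numeral M n = x +ᴹ y ↔ ∃ k l, n = k + l ∧ x = numeral M k ∧ y = numeral M l := by
  constructor
  · intro hn
    obtain ⟨⟨k, rfl⟩, l, rfl⟩ := h.isStd_of_add ⟨n, hn.symm⟩
    rw [h.numeral_add, h.numeral_inj] at hn
    exact ⟨k, l, hn, rfl, rfl⟩
  · rintro ⟨k, l, rfl, rfl, rfl⟩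
    rw [h.numeral_add]

theorem isStd_of_mul_numeral (h : IsPAModel M) {x : M} {n : ℕ} (hn : 0 < n) :
    IsStd (x *ᴹ numeral M n) → IsStd x := by
  intro hx
  obtain ⟨n, rfl⟩ := Nat.exists_eq_add_one.2 hn
  rw [numeral, h.mul_succ] at hx
  exact (h.isStd_of_add hx).2

theorem numeral_eq_mul_add_iff (h : IsPAModel M) {x y : M} {m n : ℕ} (hn : 0 < n) :
    numeral M m = x *ᴹ numeral M n +ᴹ y ↔
      ∃ k l, m = k * n + l ∧ x = numeral M k ∧ y = numeral M l := by
  constructor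
  · intro hm
    have hstd := h.isStd_of_add ⟨m, hm.symm⟩
    obtain ⟨⟨k, rfl⟩, l, rfl⟩ := And.intro (h.isStd_of_mul_numeral hn hstd.1) hstd.2
    rw [h.numeral_mul, h.numeral_add, h.numeral_inj] at hm
    exact ⟨k, l, hm, rfl, rfl⟩
  · rintro ⟨k, l, rfl, rfl, rfl⟩
    rw [h.numeral_mul, h.numeral_add]

/-- The canonical embedding of the standard model into `M`. -/
def numeralEmbedding (h : IsPAModel M) : ℕ ↪[arith] M where
  toFun := numeral M
  inj' := h.numeral_injective
  map_fun' f v := by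
    cases f with
    | zero => exact congrArg (Structure.funMap (L := arith) arithFunc.zero) (Subsingleton.elim _ _)
    | one =>
      exact h.numeral_one.trans
        (congrArg (Structure.funMap (L := arith) arithFunc.one) (Subsingleton.elim _ _))
    | add =>
      exact (h.numeral_add _ _).symm.trans (congrArg (Structure.funMap (L := arith) arithFunc.add)
        (FinVec.etaExpand_eq (numeral M ∘ v)))
    | mul =>
      exact (h.numeral_mul _ _).symm.trans (congrArg (Structure.funMap (L := arith) arithFunc.mul)
        (FinVec.etaExpand_eq (numeral M ∘ v)))
  map_rel' r v := by
    cases r with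
    | lt =>
      exact (congrArg (Structure.RelMap (L := arith) arithRel.lt)
        (FinVec.etaExpand_eq (numeral M ∘ v))).symm.to_iff.trans h.numeral_lt_numeral

end IsPAModel

namespace NonstandardModel

theorem exists_not_isStd (hM : NonstandardModel M) : ∃ x : M, ¬IsStd x := by
  by_contra! hstd
  have hbij : Function.Bijective hM.1.numeralEmbedding :=
    ⟨hM.1.numeralEmbedding.injective, fun x => (hstd x).imp fun _ => Eq.symm⟩
  let e : ℕ ≃[arith] M := ⟨Equiv.ofBijective _ hbij, hM.1.numeralEmbedding.map_fun',
    hM.1.numeralEmbedding.map_rel'⟩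
  exact hM.2 ⟨e.symm⟩

theorem overspill (hM : NonstandardModel M) {P : M → Prop}
    (hP : DefinablePred arith Set.univ fun v : Fin 1 → M => P (v 0))
    (hstd : ∀ n, P (numeral M n)) : ∃ x, ¬IsStd x ∧ P x := by
  by_contra! hP_std
  obtain ⟨a, ha⟩ := hM.exists_not_isStd
  refine hP_std a ha (hM.1.induction hP (hstd 0) (fun x hx => ?_) a)
  obtain ⟨n, rfl⟩ := not_not.1 fun hx' => hP_std x hx' hx
  exact hstd (n + 1)

end NonstandardModel

end Numerals

/-! ### Recursion in a model of arithmetic -/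

section DefinableFunctions

variable {M : Type*} [arith.Structure M] {α : Type*} {f g : (α → M) → M}

/-- The remainder of `x` on division by `y`, computed in `M`. -/
noncomputable def modM (x y : M) : M := descrM fun r => r <ᴹ y ∧ ∃ q, x = q *ᴹ y +ᴹ r

open Classical in
/-- The pairing function `Nat.pair`, computed in `M`. -/
noncomputable def pairM (a b : M) : M := if a <ᴹ b then b *ᴹ b +ᴹ a else a *ᴹ a +ᴹ a +ᴹ b

/-- The first component of a pair coded by `pairM`. -/
noncomputable def fstM (p : M) : M := descrM fun a => ∃ b, pairM a b = p

/-- The second component of a pair coded by `pairM`. -/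
noncomputable def sndM (p : M) : M := descrM fun b => ∃ a, pairM a b = p

/-- Gödel's function `Nat.beta`, computed in `M`: the `i`-th entry of the sequence coded by `s`. -/
noncomputable def betaM (s i : M) : M :=
  modM (fstM s) ((i +ᴹ oneM M) *ᴹ sndM s +ᴹ oneM M)

/-- Primitive recursion in `M` with initial value `a` and step `F`, evaluated at `n` through a
sequence coded by `betaM`.  No properties of `betaM` are proved inside `M`, so this value is only
controlled for standard `n` and standard intermediate values. -/
noncomputable def recM (a : M) (F : M → M → M) (n : M) : M :=
  descrM fun z => ∃ s, betaM s (zeroM M) = a ∧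
    (∀ k, k <ᴹ n → betaM s (k +ᴹ oneM M) = F k (betaM s k)) ∧ betaM s n = z

/-- The least element satisfying `P`, with junk value `0` if there is none. -/
noncomputable def findM (P : M → Prop) : M := descrM fun z => P z ∧ ∀ w, w <ᴹ z → ¬P w

theorem definableFun_modM (hf : Set.univ.DefinableFun arith f)
    (hg : Set.univ.DefinableFun arith g) :
    Set.univ.DefinableFun arith fun v => modM (f v) (g v) := by
  refine definableFun_comp₂ (definableFun_descrM ?_) hf hg
  apply_rules [Set.DefinableFun.proj, definableFun_addM, definableFun_mulM, DefinablePred.ltM,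
    DefinablePred.eq, DefinablePred.and, DefinablePred.ex]

open Classical in
theorem definableFun_pairM (hf : Set.univ.DefinableFun arith f)
    (hg : Set.univ.DefinableFun arith g) :
    Set.univ.DefinableFun arith fun v => pairM (f v) (g v) := by
  refine Set.DefinableFun.ite (DefinablePred.ltM hf hg) ?_ ?_ <;>
  apply_rules [definableFun_addM, definableFun_mulM]

theorem definableFun_fstM (hf : Set.univ.DefinableFun arith f) :
    Set.univ.DefinableFun arith fun v => fstM (f v) := by
  refine definableFun_comp₁ (definableFun_descrM ?_) hf
  apply_rules [Set.DefinableFun.proj, definableFun_pairM, DefinablePred.eq, DefinablePred.ex]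

theorem definableFun_sndM (hf : Set.univ.DefinableFun arith f) :
    Set.univ.DefinableFun arith fun v => sndM (f v) := by
  refine definableFun_comp₁ (definableFun_descrM ?_) hf
  apply_rules [Set.DefinableFun.proj, definableFun_pairM, DefinablePred.eq, DefinablePred.ex]

theorem definableFun_betaM (hf : Set.univ.DefinableFun arith f)
    (hg : Set.univ.DefinableFun arith g) :
    Set.univ.DefinableFun arith fun v => betaM (f v) (g v) := by
  unfold betaM
  apply_rules [definableFun_const, definableFun_addM, definableFun_mulM, definableFun_modM,
    definableFun_fstM, definableFun_sndM]

theorem definableFun_recM [Finite α] {F : (α → M) → M → M → M}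
    (hf : Set.univ.DefinableFun arith f)
    (hF : Set.univ.DefinableFun arith fun w : Option (Option α) → M =>
      F (fun i => w (some (some i))) (w (some none)) (w none))
    (hg : Set.univ.DefinableFun arith g) :
    Set.univ.DefinableFun arith fun v => recM (f v) (F v) (g v) := by
  have hf' := definableFun_reindex (fun i => some (some i)) hf
  have hg' := definableFun_reindex (fun i => some (some i)) hg
  have hg'' := definableFun_reindex (fun i => some (some (some i))) hg
  have hF' : Set.univ.DefinableFun arith fun w : Option (Option (Option α)) → M =>
      F (fun i => w (some (some (some i)))) (w none) (betaM (w (some none)) (w none)) := by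
    refine Set.DefinableFun.comp (g := fun w i => i.elim (betaM (w (some none)) (w none))
      fun j => j.elim (w none) fun i => w (some (some (some i)))) ?_ hF
    rintro (_ | _ | i)
    exacts [definableFun_betaM (.proj arith) (.proj arith), .proj arith, .proj arith]
  refine definableFun_descrM (.ex (.and (.eq ?_ hf') (.and (.all (.imp (.ltM ?_ hg'')
    (.eq ?_ hF'))) (.eq (definableFun_betaM ?_ hg') ?_)))) <;>
  apply_rules [Set.DefinableFun.proj, definableFun_const, definableFun_addM, definableFun_betaM]

theorem definableFun_findM {P : (α → M) → M → Prop}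
    (hP : DefinablePred arith Set.univ
      fun w : Option α → M => P (fun i => w (some i)) (w none)) :
    Set.univ.DefinableFun arith fun v => findM (P v) := by
  have hP' : DefinablePred arith Set.univ fun w : Option (Option α) → M =>
      P (fun i => w (some (some i))) (w none) :=
    hP.preimage_comp fun i : Option α => i.elim none fun j => some (some j)
  exact definableFun_descrM (hP.and (.all (.imp (.ltM (.proj arith) (.proj arith)) hP'.not)))

end DefinableFunctions

theorem exists_beta_eq (g : ℕ → ℕ) (n : ℕ) : ∃ s, ∀ i ≤ n, Nat.beta s i = g i := by
  refine ⟨Nat.unbeta (List.ofFn fun i : Fin (n + 1) => g i), fun i hi => ?_⟩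
  simpa [-List.ofFn_succ] using
    Nat.beta_unbeta_coe (List.ofFn fun i : Fin (n + 1) => g i) ⟨i, by simpa using hi⟩

section Correctness

variable {M : Type*} [arith.Structure M]

namespace IsPAModel

theorem modM_numeral (h : IsPAModel M) {m n : ℕ} (hn : 0 < n) :
    modM (numeral M m) (numeral M n) = numeral M (m % n) := by
  refine descrM_eq fun r => ?_
  simp only [h.numeral_eq_mul_add_iff hn]
  constructor
  · rintro ⟨hr, _, k, l, rfl, -, rfl⟩
    rw [Nat.mul_add_mod_self_right, Nat.mod_eq_of_lt (h.numeral_lt_numeral.1 hr)]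
  · rintro rfl
    exact ⟨h.numeral_lt_numeral.2 (Nat.mod_lt m hn), _, m / n, m % n, (Nat.div_add_mod' m n).symm,
      rfl, rfl⟩

theorem pairM_numeral (h : IsPAModel M) (a b : ℕ) :
    pairM (numeral M a) (numeral M b) = numeral M (Nat.pair a b) := by
  simp only [pairM, h.numeral_lt_numeral, h.numeral_mul, h.numeral_add, Nat.pair,
    apply_ite (numeral M)]

theorem isStd_of_pairM (h : IsPAModel M) {a b : M} (hab : IsStd (pairM a b)) :
    IsStd a ∧ IsStd b := by
  rw [pairM] at hab
  split_ifs at hab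
  · obtain ⟨hbb, ha⟩ := h.isStd_of_add hab
    refine ⟨ha, ?_⟩
    rcases h.zero_or_succ b with rfl | ⟨b, rfl⟩
    · exact isStd_numeral 0
    · exact (h.isStd_of_add ((h.mul_succ _ _).symm ▸ hbb)).2
  · obtain ⟨haa, hb⟩ := h.isStd_of_add hab
    exact ⟨(h.isStd_of_add haa).2, hb⟩

theorem pairM_eq_numeral_iff (h : IsPAModel M) {a b : M} {p : ℕ} :
    pairM a b = numeral M p ↔ a = numeral M p.unpair.1 ∧ b = numeral M p.unpair.2 := by
  constructor
  · intro hp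
    obtain ⟨⟨a, rfl⟩, b, rfl⟩ := h.isStd_of_pairM ⟨p, hp⟩
    rw [h.pairM_numeral, h.numeral_inj] at hp
    simp [← hp]
  · rintro ⟨rfl, rfl⟩
    rw [h.pairM_numeral, Nat.pair_unpair]

theorem fstM_numeral (h : IsPAModel M) (p : ℕ) :
    fstM (numeral M p) = numeral M p.unpair.1 :=
  descrM_eq fun _ => by simp [h.pairM_eq_numeral_iff]

theorem sndM_numeral (h : IsPAModel M) (p : ℕ) :
    sndM (numeral M p) = numeral M p.unpair.2 :=
  descrM_eq fun _ => by simp [h.pairM_eq_numeral_iff]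

theorem betaM_numeral (h : IsPAModel M) (s i : ℕ) :
    betaM (numeral M s) (numeral M i) = numeral M (Nat.beta s i) := by
  rw [betaM, h.fstM_numeral, h.sndM_numeral, numeral_add_one, h.numeral_mul, numeral_add_one,
    h.modM_numeral (Nat.succ_pos _)]
  rfl

theorem recM_numeral (h : IsPAModel M) {a : M} {F : M → M → M} {g : ℕ → ℕ} {n : ℕ}
    (ha : a = numeral M (g 0))
    (hF : ∀ k < n, F (numeral M k) (numeral M (g k)) = numeral M (g (k + 1))) :
    recM a F (numeral M n) = numeral M (g n) := by
  refine descrM_eq fun z => ⟨?_, ?_⟩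
  · rintro ⟨s, hzero, hstep, rfl⟩
    have hbeta : ∀ k ≤ n, betaM s (numeral M k) = numeral M (g k) := by
      intro k
      induction k with
      | zero => exact fun _ => hzero.trans ha
      | succ k ih =>
        intro hk
        rw [numeral, hstep _ (h.numeral_lt_numeral.2 hk), ih (Nat.le_of_succ_le hk), hF k hk]
    exact hbeta n le_rfl
  · rintro rfl
    obtain ⟨s, hs⟩ := exists_beta_eq g n
    have hbeta : ∀ k ≤ n, betaM (numeral M s) (numeral M k) = numeral M (g k) := fun k hk => by
      rw [h.betaM_numeral, hs k hk]
    refine ⟨numeral M s, (hbeta 0 n.zero_le).trans ha.symm, fun k hk => ?_, hbeta n le_rfl⟩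
    obtain ⟨k, hkn, rfl⟩ := h.lt_numeral_iff.1 hk
    rw [numeral_add_one, hbeta (k + 1) hkn, hbeta k hkn.le, hF k hkn]

theorem findM_numeral (h : IsPAModel M) {P : M → Prop} {n : ℕ} (hn : P (numeral M n))
    (hlt : ∀ k < n, ¬P (numeral M k)) : findM P = numeral M n := by
  refine descrM_eq fun z => ⟨fun ⟨hz, hz_min⟩ => ?_, ?_⟩
  · obtain ⟨k, rfl⟩ : IsStd z := by
      by_contra hstd
      exact hz_min _ (h.numeral_lt_of_not_isStd hstd n) hn
    rcases lt_trichotomy k n with hkn | rfl | hnk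
    · exact absurd hz (hlt k hkn)
    · rfl
    · exact absurd hn (hz_min _ (h.numeral_lt_numeral.2 hnk))
  · rintro rfl
    refine ⟨hn, fun w hw => ?_⟩
    obtain ⟨k, hk, rfl⟩ := h.lt_numeral_iff.1 hw
    exact hlt k hk

end IsPAModel

end Correctness

section BinaryDigits

variable {M : Type*} [arith.Structure M] {α : Type*} {f g : (α → M) → M}

/-- The power `2 ^ x`, computed in `M`. -/
noncomputable def twoPowM (x : M) : M := recM (oneM M) (fun _ e => e +ᴹ e) x

/-- The `x`-th binary digit of `a` is `1`; this extends `digitB` to possibly nonstandard `x`. -/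
def DigitM (a x : M) : Prop :=
  ∃ u v, a = u *ᴹ twoPowM (x +ᴹ oneM M) +ᴹ (twoPowM x +ᴹ v) ∧ v <ᴹ twoPowM x

theorem definableFun_twoPowM (hf : Set.univ.DefinableFun arith f) :
    Set.univ.DefinableFun arith fun v => twoPowM (f v) :=
  definableFun_comp₁ (definableFun_recM (F := fun _ _ e => e +ᴹ e) (definableFun_const _)
    (definableFun_addM (.proj arith) (.proj arith)) (.proj arith)) hf

theorem DefinablePred.digitM (hf : Set.univ.DefinableFun arith f)
    (hg : Set.univ.DefinableFun arith g) :
    DefinablePred arith Set.univ fun v => DigitM (f v) (g v) := by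
  refine comp₂ (.ex (.ex (.and ?_ ?_))) hf hg <;>
  apply_rules [Set.DefinableFun.proj, definableFun_const, definableFun_addM, definableFun_mulM,
    definableFun_twoPowM, DefinablePred.eq, DefinablePred.ltM]

namespace IsPAModel

theorem twoPowM_numeral (h : IsPAModel M) (n : ℕ) :
    twoPowM (numeral M n) = numeral M (2 ^ n) :=
  h.recM_numeral (g := fun n => 2 ^ n) h.numeral_one.symm fun k _ => by
    rw [h.numeral_add, pow_succ, mul_two]

theorem digitM_numeral (h : IsPAModel M) {a : M} {i : ℕ} :
    DigitM a (numeral M i) ↔ digitB a i := by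
  rw [DigitM, numeral_add_one, h.twoPowM_numeral, h.twoPowM_numeral, digitB]

end IsPAModel

theorem testBit_iff_exists_eq_add {a i : ℕ} :
    a.testBit i ↔ ∃ u v, a = u * 2 ^ (i + 1) + (2 ^ i + v) ∧ v < 2 ^ i := by
  have hpos : 0 < 2 ^ i := by positivity
  rw [Nat.testBit_eq_decide_div_mod_eq, decide_eq_true_iff]
  constructor
  · intro hmod
    refine ⟨a / 2 ^ i / 2, a % 2 ^ i, ?_, Nat.mod_lt _ hpos⟩
    calc a = (a / 2 ^ i / 2 * 2 + a / 2 ^ i % 2) * 2 ^ i + a % 2 ^ i := by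
          rw [Nat.div_add_mod', Nat.div_add_mod']
      _ = a / 2 ^ i / 2 * 2 ^ (i + 1) + (2 ^ i + a % 2 ^ i) := by rw [hmod]; ring
  · rintro ⟨u, v, rfl, hv⟩
    have hsum : u * 2 ^ (i + 1) + (2 ^ i + v) = v + 2 ^ i * (2 * u + 1) := by ring
    rw [hsum, Nat.add_mul_div_left _ _ hpos, Nat.div_eq_of_lt hv]
    omega

theorem exists_testBit_iff_mem (X : Set ℕ) (n : ℕ) :
    ∃ a, n < a ∧ ∀ i < n, (a.testBit i ↔ i ∈ X) := by
  classical
  refine ⟨2 ^ n + Nat.ofBits fun i : Fin n => decide ((i : ℕ) ∈ X),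
    Nat.lt_two_pow_self.trans_le (Nat.le_add_right _ _), fun i hi => ?_⟩
  rw [Nat.testBit_two_pow_add_gt hi, Nat.testBit_ofBits_lt _ _ hi, decide_eq_true_iff]

theorem IsPAModel.digitB_numeral (h : IsPAModel M) {a i : ℕ} :
    digitB (numeral M a) i ↔ a.testBit i := by
  rw [testBit_iff_exists_eq_add, digitB]
  simp only [h.numeral_eq_mul_add_iff (Nat.two_pow_pos (i + 1))]
  constructor
  · rintro ⟨_, v, ⟨u, w, rfl, rfl, hw⟩, hv⟩
    obtain ⟨v, hvi, rfl⟩ := h.lt_numeral_iff.1 hv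
    rw [h.numeral_add, h.numeral_inj] at hw
    exact ⟨u, v, hw ▸ rfl, hvi⟩
  · rintro ⟨u, v, rfl, hv⟩
    exact ⟨_, numeral M v, ⟨u, 2 ^ i + v, rfl, rfl, h.numeral_add _ _⟩,
      h.numeral_lt_numeral.2 hv⟩

namespace NonstandardModel

theorem mem_SSy_iff (hM : NonstandardModel M) {X : Set ℕ} :
    X ∈ SSy M ↔ ∃ D : Set M, Set.univ.Definable₁ arith D ∧ X = numeral M ⁻¹' D := by
  have h := hM.1
  constructor
  · rintro ⟨a, -, ha⟩
    refine ⟨{x | DigitM a x}, DefinablePred.digitM (definableFun_const a) (.proj arith), ?_⟩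
    ext i
    exact (ha i).trans h.digitM_numeral.symm
  · rintro ⟨D, hD, rfl⟩
    obtain ⟨n, hn, a, hna, ha⟩ := hM.overspill
      (P := fun n => ∃ a, n <ᴹ a ∧ ∀ i, i <ᴹ n → (DigitM a i ↔ i ∈ D)) (by
        apply_rules [Set.DefinableFun.proj, DefinablePred.digitM, DefinablePred.ltM,
          DefinablePred.mem hD, DefinablePred.iff, DefinablePred.and, DefinablePred.imp,
          DefinablePred.all, DefinablePred.ex]) fun n => by
      obtain ⟨a, hna, ha⟩ := exists_testBit_iff_mem (numeral M ⁻¹' D) n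
      refine ⟨numeral M a, h.numeral_lt_numeral.2 hna, fun i hi => ?_⟩
      obtain ⟨i, hin, rfl⟩ := h.lt_numeral_iff.1 hi
      rw [h.digitM_numeral, h.digitB_numeral, ha i hin, Set.mem_preimage]
    refine ⟨a, fun ha_std => hn (h.isStd_of_lt hna ha_std), fun i => ?_⟩
    rw [← h.digitM_numeral, ha _ (h.numeral_lt_of_not_isStd hn i), Set.mem_preimage]

end NonstandardModel

end BinaryDigits

/-! ### Closure properties of the standard system -/

section TuringJoin

variable {M : Type*} [arith.Structure M]

theorem NonstandardModel.turingJoin_mem_SSy (hM : NonstandardModel M) {X Y : Set ℕ}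
    (hX : X ∈ SSy M) (hY : Y ∈ SSy M) : turingJoin X Y ∈ SSy M := by
  obtain ⟨D, hD, rfl⟩ := hM.mem_SSy_iff.1 hX
  obtain ⟨E, hE, rfl⟩ := hM.mem_SSy_iff.1 hY
  refine hM.mem_SSy_iff.2 ⟨{x | (∃ y, y ∈ D ∧ x = y *ᴹ numeral M 2 +ᴹ numeral M 0) ∨
    ∃ y, y ∈ E ∧ x = y *ᴹ numeral M 2 +ᴹ numeral M 1}, ?_, ?_⟩
  · change DefinablePred _ _ _
    apply_rules [Set.DefinableFun.proj, definableFun_const, definableFun_addM, definableFun_mulM,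
      DefinablePred.mem hD, DefinablePred.mem hE, DefinablePred.eq, DefinablePred.and,
      DefinablePred.or, DefinablePred.ex]
  · ext n
    simp [turingJoin, hM.1.numeral_eq_mul_add_iff two_pos, hM.1.numeral_inj, mul_comm 2,
      and_comm, and_assoc]

end TuringJoin

/-- The partial function `f` is computed on its domain by a definable function of `M`. -/
def Representable (M : Type*) [arith.Structure M] (f : ℕ →. ℕ) : Prop :=
  ∃ G : M → M, DefinableFun₁ G ∧ ∀ n, ∀ m ∈ f n, G (numeral M n) = numeral M m

theorem exists_seq_of_mem_rec {p : Part ℕ} {g : ℕ → ℕ → Part ℕ} {n x : ℕ}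
    (hx : x ∈ (Nat.rec p (fun k IH => IH.bind (g k)) n : Part ℕ)) :
    ∃ t : ℕ → ℕ, t 0 ∈ p ∧ (∀ k < n, t (k + 1) ∈ g k (t k)) ∧ t n = x := by
  induction n generalizing x with
  | zero => exact ⟨fun _ => x, hx, fun k hk => absurd hk k.not_lt_zero, rfl⟩
  | succ n ih =>
    obtain ⟨y, hy, hxy⟩ := Part.mem_bind_iff.1 hx
    obtain ⟨t, hzero, hstep, rfl⟩ := ih hy
    refine ⟨Function.update t (n + 1) x, by simpa using hzero, fun k hk => ?_, by simp⟩
    rcases Nat.lt_succ_iff_lt_or_eq.1 hk with hkn | rfl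
    · simpa [hkn.ne, hk.ne] using hstep k hkn
    · simpa using hxy

namespace Representable

variable {M : Type*} [arith.Structure M] {f g : ℕ →. ℕ}

theorem of_total {f : ℕ → ℕ} {G : M → M}
    (hG : Set.univ.DefinableFun arith fun v : Fin 1 → M => G (v 0))
    (hGf : ∀ n, G (numeral M n) = numeral M (f n)) : Representable M f :=
  ⟨G, definableFun₁_of hG, fun n _ hm => Part.mem_some_iff.1 hm ▸ hGf n⟩

open Classical in
theorem charFn_preimage {D : Set M} (hD : Set.univ.Definable₁ arith D) :
    Representable M (charFn (numeral M ⁻¹' D)) :=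
  of_total (G := fun x => if x ∈ D then numeral M 1 else numeral M 0)
    (.ite (DefinablePred.mem hD (.proj arith)) (definableFun_const _) (definableFun_const _))
    fun n => by simp only [charFn, Set.mem_preimage, apply_ite (numeral M)]

theorem pair (h : IsPAModel M) (hf : Representable M f) (hg : Representable M g) :
    Representable M fun n => Nat.pair <$> f n <*> g n := by
  obtain ⟨F, hF, hFf⟩ := hf
  obtain ⟨G, hG, hGg⟩ := hg
  refine ⟨fun x => pairM (F x) (G x),
    definableFun₁_of (definableFun_pairM (hF.comp (.proj arith)) (hG.comp (.proj arith))),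
    fun n m hm => ?_⟩
  obtain ⟨a, ha, b, hb, rfl⟩ : ∃ a ∈ f n, ∃ b ∈ g n, Nat.pair a b = m := by
    simpa [Seq.seq] using hm
  simp only [hFf n a ha, hGg n b hb, h.pairM_numeral]

theorem comp (hf : Representable M f) (hg : Representable M g) :
    Representable M fun n => g n >>= f := by
  obtain ⟨F, hF, hFf⟩ := hf
  obtain ⟨G, hG, hGg⟩ := hg
  refine ⟨fun x => F (G x), definableFun₁_of (hF.comp (hG.comp (.proj arith))), fun n m hm => ?_⟩
  obtain ⟨a, ha, ham⟩ := Part.mem_bind_iff.1 hm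
  simp only [hGg n a ha, hFf a m ham]

theorem prec (h : IsPAModel M) (hf : Representable M f) (hg : Representable M g) :
    Representable M (Nat.unpaired fun a n =>
      n.rec (f a) fun y IH => do let i ← IH; g (Nat.pair a (Nat.pair y i))) := by
  obtain ⟨F, hF, hFf⟩ := hf
  obtain ⟨G, hG, hGg⟩ := hg
  refine ⟨fun x => recM (F (fstM x)) (fun k e => G (pairM (fstM x) (pairM k e))) (sndM x),
    definableFun₁_of (definableFun_recM
      (F := fun v k e => G (pairM (fstM (v 0)) (pairM k e))) ?_ ?_ ?_), fun p m hm => ?_⟩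
  · exact hF.comp (definableFun_fstM (.proj arith))
  · apply hG.comp
    apply_rules [Set.DefinableFun.proj, definableFun_pairM, definableFun_fstM]
  · exact definableFun_sndM (.proj arith)
  · obtain ⟨t, hzero, hstep, rfl⟩ := exists_seq_of_mem_rec
      (g := fun k i => g (Nat.pair p.unpair.1 (Nat.pair k i))) hm
    simp only [h.fstM_numeral, h.sndM_numeral]
    refine h.recM_numeral (hFf _ _ hzero) fun k hk => ?_
    simp only [h.pairM_numeral, hGg _ _ (hstep k hk)]

theorem rfind (h : IsPAModel M) (hf : Representable M f) :
    Representable M fun a => Nat.rfind fun n => (fun m => m = 0) <$> f (Nat.pair a n) := by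
  obtain ⟨F, hF, hFf⟩ := hf
  refine ⟨fun x => findM fun z => F (pairM x z) = numeral M 0,
    definableFun₁_of (definableFun_findM (P := fun v z => F (pairM (v 0) z) = numeral M 0) ?_),
    fun a n hn => ?_⟩
  · exact .eq (hF.comp (definableFun_pairM (.proj arith) (.proj arith))) (definableFun_const _)
  · obtain ⟨hzero, hlt⟩ := Nat.mem_rfind.1 hn
    replace hzero : 0 ∈ f (Nat.pair a n) := by simpa using hzero
    refine h.findM_numeral (by rw [h.pairM_numeral, hFf _ _ hzero]) fun k hk => ?_
    obtain ⟨e, he, he_ne⟩ := (Part.mem_map_iff _).1 (hlt hk)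
    rw [h.pairM_numeral, hFf _ _ he, h.numeral_inj]
    simpa using he_ne

theorem of_recursiveIn (h : IsPAModel M) {O : ℕ → ℕ} (hO : Representable M O)
    (hf : RecursiveIn O f) : Representable M f := by
  induction hf with
  | zero => exact of_total (G := fun _ => numeral M 0) (definableFun_const _) fun _ => rfl
  | succ =>
    exact of_total (G := fun x => x +ᴹ oneM M)
      (definableFun_addM (.proj arith) (definableFun_const _)) numeral_add_one
  | left => exact of_total (definableFun_fstM (.proj arith)) h.fstM_numeral
  | right => exact of_total (definableFun_sndM (.proj arith)) h.sndM_numeral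
  | oracle => exact hO
  | pair _ _ hf hg => exact hf.pair h hg
  | comp _ _ hf hg => exact hf.comp hg
  | prec _ _ hf hg => exact hf.prec h hg
  | rfind _ hf => exact hf.rfind h

end Representable

theorem NonstandardModel.mem_SSy_of_turingLE {M : Type*} [arith.Structure M]
    (hM : NonstandardModel M) {X Y : Set ℕ} (hX : X ∈ SSy M) (hYX : TuringLE Y X) :
    Y ∈ SSy M := by
  obtain ⟨D, hD, rfl⟩ := hM.mem_SSy_iff.1 hX
  obtain ⟨G, hG, hGY⟩ := (Representable.charFn_preimage hD).of_recursiveIn hM.1 hYX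
  refine hM.mem_SSy_iff.2 ⟨{x | G x = numeral M 1},
    DefinablePred.eq (hG.comp (.proj arith)) (definableFun_const _), ?_⟩
  ext n
  rw [Set.mem_preimage, Set.mem_ofPred_eq, hGY n _ (Part.mem_some _), hM.1.numeral_inj, charFn]
  split_ifs with hn <;> simp [hn]

section DigitSequences

variable {M : Type*} [arith.Structure M] {α : Type*} {f g : (α → M) → M}

/-- The difference `m - k`, computed in `M`, with junk value `0` if `m < k`. -/
noncomputable def subM (m k : M) : M := descrM fun j => m = j +ᴹ k

open Classical in
/-- The `x`-th binary digit of `a`, as the code `0` or `1` of a Boolean. -/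
noncomputable def bitM (a x : M) : M := if DigitM a x then numeral M 1 else numeral M 0

/-- The code of the sequence of the first `m` binary digits of `a`.  A list is coded by
`encode (b :: l) = pair (encode b) (encode l) + 1`, so the recursion reads the digits from the
`m - 1`-st down to the `0`-th. -/
noncomputable def digitsCodeM (a m : M) : M :=
  recM (zeroM M) (fun k e => pairM (bitM a (subM m (k +ᴹ oneM M))) e +ᴹ oneM M) m

theorem definableFun_subM (hf : Set.univ.DefinableFun arith f)
    (hg : Set.univ.DefinableFun arith g) :
    Set.univ.DefinableFun arith fun v => subM (f v) (g v) :=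
  definableFun_comp₂ (definableFun_descrM
    (.eq (.proj arith) (definableFun_addM (.proj arith) (.proj arith)))) hf hg

open Classical in
theorem definableFun_bitM (hf : Set.univ.DefinableFun arith f)
    (hg : Set.univ.DefinableFun arith g) :
    Set.univ.DefinableFun arith fun v => bitM (f v) (g v) :=
  .ite (DefinablePred.digitM hf hg) (definableFun_const _) (definableFun_const _)

theorem definableFun_digitsCodeM (hf : Set.univ.DefinableFun arith f)
    (hg : Set.univ.DefinableFun arith g) :
    Set.univ.DefinableFun arith fun v => digitsCodeM (f v) (g v) := by
  refine definableFun_comp₂ (definableFun_recM (F := fun v k e =>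
    pairM (bitM (v 0) (subM (v 1) (k +ᴹ oneM M))) e +ᴹ oneM M) ?_ ?_ ?_) hf hg <;>
  apply_rules [Set.DefinableFun.proj, definableFun_const, definableFun_addM, definableFun_pairM,
    definableFun_subM, definableFun_bitM]

namespace IsPAModel

theorem subM_numeral (h : IsPAModel M) {m k : ℕ} (hkm : k ≤ m) :
    subM (numeral M m) (numeral M k) = numeral M (m - k) := by
  refine descrM_eq fun j => ?_
  rw [h.numeral_eq_add_iff]
  constructor
  · rintro ⟨l, k', rfl, rfl, hk⟩
    rw [h.numeral_inj.1 hk, Nat.add_sub_cancel]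
  · rintro rfl
    exact ⟨m - k, k, (Nat.sub_add_cancel hkm).symm, rfl, rfl⟩

theorem bitM_numeral (h : IsPAModel M) {a : M} {i : ℕ} {b : Bool} (hb : b ↔ digitB a i) :
    bitM a (numeral M i) = numeral M (Encodable.encode b) := by
  simp only [bitM, h.digitM_numeral, ← hb]
  cases b <;> rfl

theorem digitsCodeM_numeral (h : IsPAModel M) {a : M} {b : ℕ → Bool}
    (hb : ∀ i, b i ↔ digitB a i) (m : ℕ) :
    digitsCodeM a (numeral M m) =
      numeral M (Encodable.encode (List.ofFn fun i : Fin m => b i)) := by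
  let suffixCode (k : ℕ) : ℕ := Encodable.encode (List.ofFn fun i : Fin k => b (m - k + i))
  have hsuffix : ∀ k < m, suffixCode (k + 1) =
      Nat.pair (Encodable.encode (b (m - (k + 1)))) (suffixCode k) + 1 := fun k hk => by
    have hshift : ∀ i, m - (k + 1) + (i + 1) = m - k + i := by omega
    simp only [suffixCode, List.ofFn_succ, Encodable.encode_list_cons, Fin.val_zero, Fin.val_succ,
      Nat.add_zero, hshift, Nat.succ_eq_add_one]
  have hrec := h.recM_numeral (a := zeroM M) (g := suffixCode) (n := m)
    (F := fun k e => pairM (bitM a (subM (numeral M m) (k +ᴹ oneM M))) e +ᴹ oneM M) rfl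
    fun k hk => by
      rw [numeral_add_one, h.subM_numeral hk, h.bitM_numeral (hb _), h.pairM_numeral,
        numeral_add_one, hsuffix k hk]
  simpa only [digitsCodeM, suffixCode, Nat.sub_self, Nat.zero_add] using hrec

end IsPAModel

end DigitSequences

theorem exists_mem_tree_of_length {T : Set ℕ} (hT : IsBinTreeSet T) (hinf : TreeInf T) (n : ℕ) :
    ∃ s : List Bool, s.length = n ∧ Encodable.encode s ∈ T := by
  by_contra! hcon
  refine hinf ((List.finite_length_lt Bool n).subset fun s hs => ?_)
  by_contra! hlen
  exact hcon (s.take n) (List.length_take_of_le (not_lt.1 hlen)) (hT s hs _ (List.take_prefix n s))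

theorem exists_testBit_path {T : Set ℕ} (hT : IsBinTreeSet T) (hinf : TreeInf T) (n : ℕ) :
    ∃ a : ℕ, ∀ m < n, Encodable.encode (List.ofFn fun i : Fin m => a.testBit i) ∈ T := by
  obtain ⟨s, hs, hsT⟩ := exists_mem_tree_of_length hT hinf n
  obtain ⟨a, -, ha⟩ := exists_testBit_iff_mem {i | s[i]? = some true} n
  refine ⟨a, fun m hm => ?_⟩
  have htake : (List.ofFn fun i : Fin m => a.testBit i) = s.take m := by
    refine List.ext_getElem (by simp; omega) fun i hi _ => ?_
    have him : i < m := by simpa using hi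
    rw [List.getElem_ofFn, List.getElem_take, Bool.eq_iff_iff, ha i (him.trans hm)]
    simp [List.getElem?_eq_getElem (show i < s.length by omega)]
  exact htake ▸ hT s hsT _ (List.take_prefix m s)

namespace NonstandardModel

variable {M : Type*} [arith.Structure M]

theorem setOf_digitB_mem_SSy (hM : NonstandardModel M) (a : M) : {i | digitB a i} ∈ SSy M := by
  refine hM.mem_SSy_iff.2
    ⟨{x | DigitM a x}, DefinablePred.digitM (definableFun_const a) (.proj arith), ?_⟩
  ext i
  exact hM.1.digitM_numeral.symm

theorem exists_pathThrough (hM : NonstandardModel M) {T : Set ℕ} (hTM : T ∈ SSy M)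
    (hT : IsBinTreeSet T) (hinf : TreeInf T) : ∃ P ∈ SSy M, PathThrough P T := by
  have h := hM.1
  obtain ⟨D, hD, rfl⟩ := hM.mem_SSy_iff.1 hTM
  obtain ⟨n, hn, a, ha⟩ := hM.overspill (P := fun n => ∃ a, ∀ m, m <ᴹ n → digitsCodeM a m ∈ D)
    (by
      apply_rules [Set.DefinableFun.proj, definableFun_digitsCodeM, DefinablePred.ltM,
        DefinablePred.mem hD, DefinablePred.imp, DefinablePred.all, DefinablePred.ex])
    fun n => by
      obtain ⟨a, ha⟩ := exists_testBit_path hT hinf n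
      refine ⟨numeral M a, fun x hx => ?_⟩
      obtain ⟨m, hmn, rfl⟩ := h.lt_numeral_iff.1 hx
      rw [h.digitsCodeM_numeral (fun i => h.digitB_numeral.symm)]
      exact ha m hmn
  refine ⟨{i | digitB a i}, hM.setOf_digitB_mem_SSy a, fun b hb m => ?_⟩
  rw [Set.mem_preimage, ← h.digitsCodeM_numeral hb]
  exact ha _ (h.numeral_lt_of_not_isStd hn m)

end NonstandardModel

end Arith

open Arith in
/-- **Scott's theorem.** The standard system of any non-standard model of `PA` is a
Scott set: it is closed under Turing join (S1) and Turing reducibility (S2), and every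
infinite binary tree in it has an infinite path in it (S3). -/
theorem statement_0 (M : Type*) [arith.Structure M] (hM : NonstandardModel M) :
    ScottSet (SSy M) :=
  ⟨⟨_, hM.setOf_digitB_mem_SSy (zeroM M)⟩,
    ⟨fun _ hX _ hY => hM.turingJoin_mem_SSy hX hY, fun _ hX _ => hM.mem_SSy_of_turingLE hX⟩,
    fun _ hT => hM.exists_pathThrough hT⟩
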